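/- There exist constants A₁ > 0 and B₁ > 0 such that for all k, j ∈ ℕ with j ≤ k one has 0 ≤ a_{k,j} ≤ B₁·binom(A₁·k, j). -/

import Mathlib

open Finset

noncomputable section

/-- The generating set `S = {(1,0),(-1,0),(0,1),(0,-1)}` of ℤ². -/
def Sfin : Finset (ℤ × ℤ) := {(1,0), (-1,0), (0,1), (0,-1)}

/-- `Q u n = E |u(S_n)|²` for the simple random walk on ℤ² started at 0. -/
noncomputable def Q (u : ℤ × ℤ → ℂ) (n : ℕ) : ℝ :=
  (4 : ℝ)⁻¹ ^ n * ∑ s ∈ Fintype.piFinset (fun _ : Fin n => Sfin), ‖u (∑ i, s i)‖ ^ 2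

/-- Generalized binomial coefficient `binom(x,k) = (1/k!)·∏_{j<k}(x-j)`. -/
noncomputable def gbinom (x : ℝ) (k : ℕ) : ℝ :=
  (∏ j ∈ Finset.range k, (x - j)) / (Nat.factorial k)

/-- `F_k(x) = binom(x + (k-1)/2, k)`, a discretization of `x^k/k!`. -/
noncomputable def F (k : ℕ) (x : ℝ) : ℝ := gbinom (x + ((k : ℝ) - 1) / 2) k

/-- `Z_k(x,y) = Σ_{l=0}^k i^l F_{k-l}(x) F_l(y)`, a harmonic discretization of `z^k/k!`. -/
noncomputable def Z (k : ℕ) (x y : ℝ) : ℂ :=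
  ∑ l ∈ Finset.range (k + 1), Complex.I ^ l * (F (k - l) x : ℂ) * (F l y : ℂ)

/-- `Q_k := Q_{Z_k}` (with `Z_k` restricted to ℤ²). -/
noncomputable def Qk (k : ℕ) (n : ℕ) : ℝ := Q (fun p => Z k p.1 p.2) n

/-- Forward difference operator: `fwd f n = f (n+1) - f n`. -/
def fwd (f : ℕ → ℝ) : ℕ → ℝ := fun n => f (n + 1) - f n

/-- Newton coefficients `a_{k,j} = Q_k^{(k-j)}(0)`. -/
noncomputable def a (k j : ℕ) : ℝ := fwd^[k - j] (Qk k) 0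

/-!
Up to a factor depending only on `t`, the generating series `∑ₖ Z k x y tᵏ` is
`w(t) ^ (2x) * w(I * t) ^ (2y)`, where `w² = 1 + t * w` and `w(0) = 1`. Hence moving `z = x + y * I`
by `I ^ r / 2` multiplies it by `w(I ^ r * t)`, so `Z k` is harmonic for the simple random walk and
`Z k (z + I ^ r) - Z k z = I ^ r * Z (k - 1) (z + I ^ r / 2)` along each step. Since the mean of
`|Z k|²` over the neighbours of `z` exceeds `|Z k z|²` by the variance, taking a forward difference
of `Q_k` replaces `|Z k|²` by `|Z (k - 1)|²` and one full step of the walk by a half step, so that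
`a k j = E |Z j (S_{k - j} / 2)|² ≥ 0`.

For the upper bound, split `w` according to exponents modulo `4`. By Parseval's identity on `ℤ/4ℤ`,
averaging over a half step amounts to summing over multiplication by each of the four parts of `w`.
The `r`-th part is majorized by `t ^ r / (1 - t⁴)` and the generating series at `0` by
`1 / (1 - t⁴)`, whose powers have binomial coefficients.
-/

open PowerSeries (X C coeff constantCoeff rescale)
open Complex (I)
open scoped ComplexConjugate PowerSeries

/-! ### Binomial coefficients -/

lemma gbinom_natCast (n k : ℕ) : gbinom n k = n.choose k := by
  rw [gbinom, ← descPochhammer_eval_eq_prod_range, Nat.cast_choose_eq_descPochhammer_div]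

lemma gbinom_succ (x : ℝ) (k : ℕ) : gbinom x (k + 1) = (x - k) / (k + 1) * gbinom x k := by
  simp only [gbinom, prod_range_succ, Nat.factorial_succ]
  push_cast
  field_simp

lemma gbinom_add_one_succ (x : ℝ) (k : ℕ) :
    gbinom (x + 1) (k + 1) = (x + 1) / (k + 1) * gbinom x k := by
  have hshift : ∀ j ∈ range k, x + 1 - ((j + 1 : ℕ) : ℝ) = x - j := fun j _ => by
    push_cast; ring
  simp only [gbinom, prod_range_succ', Nat.factorial_succ, prod_congr rfl hshift]
  push_cast
  field_simp
  ring

lemma choose_mul_choose_le (a b c d : ℕ) :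
    a.choose b * c.choose d ≤ (a + c).choose (b + d) := by
  rw [Nat.add_choose_eq]
  exact single_le_sum (f := fun q : ℕ × ℕ => a.choose q.1 * c.choose q.2)
    (fun _ _ => Nat.zero_le _) (a := (b, d)) (by simp)

lemma choose_pow_le (d a b : ℕ) : a.choose b ^ d ≤ (d * a).choose (d * b) := by
  induction d with
  | zero => simp
  | succ d ih =>
    calc a.choose b ^ (d + 1) ≤ (d * a).choose (d * b) * a.choose b := by
          rw [pow_succ]; gcongr
      _ ≤ ((d + 1) * a).choose ((d + 1) * b) := by
          rw [add_one_mul, add_one_mul]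
          exact choose_mul_choose_le ..

lemma coeff_one_add_X_pow {R : Type*} [CommSemiring R] (n i : ℕ) :
    coeff i ((1 + X : R⟦X⟧) ^ n) = n.choose i := by
  rw [← Polynomial.coeff_one_add_X_pow R n i, ← Polynomial.coeff_coe]
  simp

/-! ### Roots of unity -/

lemma sum_pow_mul_conj_pow {d : ℕ} {ω : ℂ} (hω : IsPrimitiveRoot ω d) (r s : Fin d) :
    ∑ i : Fin d, (ω ^ (i : ℕ)) ^ (r : ℕ) * conj ((ω ^ (i : ℕ)) ^ (s : ℕ))
      = if r = s then (d : ℂ) else 0 := by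
  have hd : d ≠ 0 := r.pos.ne'
  have hconj : ω * conj ω = 1 := by
    rw [Complex.mul_conj, Complex.normSq_eq_norm_sq, hω.norm'_eq_one hd]
    simp
  have hpow (i : ℕ) : (ω ^ i) ^ (r : ℕ) * conj ((ω ^ i) ^ (s : ℕ))
      = (ω ^ (r : ℕ) * conj ω ^ (s : ℕ)) ^ i := by
    simp only [map_pow]
    ring
  simp only [hpow, Fin.sum_univ_eq_sum_range (fun i => (ω ^ (r : ℕ) * conj ω ^ (s : ℕ)) ^ i)]
  split_ifs with hrs
  · simp [hrs, ← mul_pow, hconj]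
  · have hne : ω ^ (r : ℕ) * conj ω ^ (s : ℕ) ≠ 1 := fun h => hrs <| Fin.ext <|
      hω.pow_inj r.is_lt s.is_lt <| by
        linear_combination ω ^ (s : ℕ) * h - ω ^ (r : ℕ) * congrArg (· ^ (s : ℕ)) hconj
    have hone : (ω ^ (r : ℕ) * conj ω ^ (s : ℕ)) ^ d = 1 := by
      rw [mul_pow, pow_right_comm, pow_right_comm _ (s : ℕ), ← map_pow, hω.pow_eq_one]
      simp
    rw [geom_sum_eq hne, hone, sub_self, zero_div]

lemma sum_norm_sq_sum_pow_mul {d : ℕ} {ω : ℂ} (hω : IsPrimitiveRoot ω d) (y : Fin d → ℂ) :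
    ∑ i : Fin d, ‖∑ r : Fin d, (ω ^ (i : ℕ)) ^ (r : ℕ) * y r‖ ^ 2 = d * ∑ r, ‖y r‖ ^ 2 := by
  apply Complex.ofReal_injective
  push_cast
  simp only [← Complex.mul_conj', map_sum, map_mul, sum_mul_sum]
  rw [sum_comm, mul_sum]
  refine sum_congr rfl fun r _ => ?_
  rw [sum_comm]
  simp only [mul_mul_mul_comm _ (y r), ← sum_mul, sum_pow_mul_conj_pow hω]
  simp

/-- The part of the power series `A` supported on the exponents `n ≡ r` modulo `d`. -/
def residuePart {R : Type*} [Semiring R] (d r : ℕ) (A : R⟦X⟧) : R⟦X⟧ :=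
  PowerSeries.mk fun n => if n % d = r then coeff n A else 0

lemma rescale_eq_sum_residuePart {R : Type*} [CommSemiring R] {d : ℕ} [NeZero d] {ω : R}
    (hω : ω ^ d = 1) (A : R⟦X⟧) :
    rescale ω A = ∑ r : Fin d, C (ω ^ (r : ℕ)) * residuePart d r A := by
  ext n
  have hn : n % d < d := Nat.mod_lt n (NeZero.pos d)
  simp only [map_sum, PowerSeries.coeff_C_mul, residuePart, PowerSeries.coeff_mk]
  rw [sum_eq_single ⟨n % d, hn⟩]
  · simp only [PowerSeries.coeff_rescale, pow_eq_pow_mod n hω, if_true]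
  · intro r _ hr
    have hne : n % d ≠ r := fun h => hr (Fin.ext h.symm)
    simp [hne]
  · simp

lemma coeff_eq_zero_of_rescale_eq {R : Type*} [CommRing R] [NoZeroDivisors R] {ω : R} {A : R⟦X⟧}
    (hA : rescale ω A = A) {n : ℕ} (hn : ω ^ n ≠ 1) : coeff n A = 0 := by
  have h := congrArg (coeff n) hA
  rw [PowerSeries.coeff_rescale] at h
  exact eq_zero_of_mul_eq_self_left hn h

/-! ### Majorants -/

/-- `A` is majorized by the real series `P` in the sense of Cauchy's method of majorants: every
coefficient of `A` is at most the corresponding coefficient of `P` in norm. -/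
def Majorized {R : Type*} [SeminormedRing R] (A : R⟦X⟧) (P : ℝ⟦X⟧) : Prop :=
  ∀ n, ‖coeff n A‖ ≤ coeff n P

section Majorized

variable {R : Type*} [SeminormedRing R] {A B : R⟦X⟧} {P P' : ℝ⟦X⟧}

lemma Majorized.mul (hA : Majorized A P) (hB : Majorized B P') : Majorized (A * B) (P * P') := by
  intro n
  rw [PowerSeries.coeff_mul, PowerSeries.coeff_mul]
  refine norm_sum_le_of_le _ fun p _ => (norm_mul_le _ _).trans ?_
  exact mul_le_mul (hA _) (hB _) (norm_nonneg _) ((norm_nonneg _).trans (hA _))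

lemma Majorized.pow [NormOneClass R] (hA : Majorized A P) (n : ℕ) :
    Majorized (A ^ n) (P ^ n) := by
  induction n with
  | zero =>
    intro k
    rw [pow_zero, pow_zero, PowerSeries.coeff_one, PowerSeries.coeff_one]
    split_ifs <;> simp
  | succ n ih =>
    rw [pow_succ, pow_succ]
    exact ih.mul hA

end Majorized

lemma Majorized.rescale {K : Type*} [NormedField K] {A : K⟦X⟧} {P : ℝ⟦X⟧}
    (hA : Majorized A P) {ω : K} (hω : ‖ω‖ ≤ 1) : Majorized (PowerSeries.rescale ω A) P := by
  intro n
  rw [PowerSeries.coeff_rescale, norm_mul, norm_pow]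
  exact (mul_le_of_le_one_left (norm_nonneg _) (pow_le_one₀ (norm_nonneg _) hω)).trans (hA n)

/-- The series whose coefficients are the squares of those of `P`, its Hadamard square. -/
def hadamardSq (P : ℝ⟦X⟧) : ℝ⟦X⟧ := PowerSeries.mk fun n => coeff n P ^ 2

lemma hadamardSq_X_pow_mul (l : ℕ) (P : ℝ⟦X⟧) :
    hadamardSq (X ^ l * P) = X ^ l * hadamardSq P := by
  ext n
  simp only [hadamardSq, PowerSeries.coeff_mk, PowerSeries.coeff_X_pow_mul']
  split_ifs <;> simp

lemma Majorized.norm_coeff_sq_le {R : Type*} [SeminormedRing R] {A : R⟦X⟧} {P : ℝ⟦X⟧}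
    (hA : Majorized A P) (n : ℕ) : ‖coeff n A‖ ^ 2 ≤ coeff n (hadamardSq P) := by
  rw [hadamardSq, PowerSeries.coeff_mk]
  exact pow_le_pow_left₀ (norm_nonneg _) (hA n) 2

lemma sum_X_pow_majorized (d : ℕ) :
    Majorized (∑ r : Fin (d + 1), X ^ (r : ℕ) : ℝ⟦X⟧) ((1 + X) ^ d) := by
  intro n
  rw [coeff_one_add_X_pow, map_sum]
  simp only [PowerSeries.coeff_X_pow]
  rw [Fin.sum_univ_eq_sum_range (fun i => if n = i then (1 : ℝ) else 0) (d + 1), sum_ite_eq]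
  split_ifs with hn
  · have hpos : 0 < d.choose n := Nat.choose_pos (Nat.lt_succ_iff.mp (mem_range.mp hn))
    rw [norm_one]
    exact_mod_cast hpos
  · simp

/-- The power series `1 / (1 - t⁴)`. -/
def quarticGeom : ℝ⟦X⟧ := PowerSeries.expand 4 four_ne_zero (PowerSeries.mk 1)

lemma coeff_quarticGeom_pow_succ (p n : ℕ) :
    coeff n (quarticGeom ^ (p + 1)) = if 4 ∣ n then ((p + n / 4).choose p : ℝ) else 0 := by
  rw [quarticGeom, ← map_pow, PowerSeries.coeff_expand, PowerSeries.mk_one_pow_eq_mk_choose_add,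
    PowerSeries.coeff_mk]

lemma coeff_quarticGeom (n : ℕ) : coeff n quarticGeom = if 4 ∣ n then 1 else 0 := by
  simpa using coeff_quarticGeom_pow_succ 0 n

lemma coeff_hadamardSq_quarticGeom_pow_succ_le (m n : ℕ) :
    coeff n (hadamardSq (quarticGeom ^ (m + 1))) ≤ ((4 * m + n).choose n : ℝ) := by
  rw [hadamardSq, PowerSeries.coeff_mk, coeff_quarticGeom_pow_succ]
  split_ifs with hn
  · obtain ⟨q, rfl⟩ := hn
    rw [Nat.mul_div_cancel_left q four_pos, Nat.choose_symm_add, ← mul_add]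
    norm_cast
    calc (m + q).choose q ^ 2 ≤ (m + q).choose q ^ 4 :=
          Nat.pow_le_pow_right (Nat.choose_pos (Nat.le_add_left q m)) (by norm_num)
      _ ≤ (4 * (m + q)).choose (4 * q) := choose_pow_le 4 (m + q) q
  · rw [zero_pow two_ne_zero]
    positivity

lemma coeff_sum_X_pow_pow_mul_hadamardSq_le (m j : ℕ) :
    coeff j ((∑ r : Fin 4, X ^ (r : ℕ)) ^ m * hadamardSq (quarticGeom ^ (m + 1)))
      ≤ ((7 * m + j).choose j : ℝ) := by
  have hsplit : 7 * m + j = 3 * m + (4 * m + j) := by ring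
  rw [PowerSeries.coeff_mul, hsplit, Nat.add_choose_eq, Nat.cast_sum]
  refine sum_le_sum fun q hq => ?_
  have hq' : q.2 ≤ j := HasAntidiagonal.antidiagonal.snd_le hq
  have hfst : coeff q.1 ((∑ r : Fin 4, X ^ (r : ℕ) : ℝ⟦X⟧) ^ m) ≤ ((3 * m).choose q.1 : ℝ) := by
    rw [← coeff_one_add_X_pow, pow_mul]
    exact (le_abs_self _).trans ((sum_X_pow_majorized 3).pow m q.1)
  have hsnd : coeff q.2 (hadamardSq (quarticGeom ^ (m + 1))) ≤ ((4 * m + j).choose q.2 : ℝ) :=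
    (coeff_hadamardSq_quarticGeom_pow_succ_le m q.2).trans (by gcongr)
  have hnonneg : 0 ≤ coeff q.2 (hadamardSq (quarticGeom ^ (m + 1))) := by
    rw [hadamardSq, PowerSeries.coeff_mk]
    positivity
  push_cast
  exact mul_le_mul hfst hsnd hnonneg (Nat.cast_nonneg _)

/-! ### The polynomials `F k` -/

lemma F_zero (x : ℝ) : F 0 x = 1 := by simp [F, gbinom]

lemma F_neg (k : ℕ) (x : ℝ) : F k (-x) = (-1) ^ k * F k x := by
  have hsign : (-1 : ℝ) ^ k = ∏ _j ∈ range k, (-1) := by simp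
  simp only [F, gbinom, ← mul_div_assoc]
  rw [← prod_range_reflect, hsign, ← prod_mul_distrib]
  refine congrArg (· / _) (prod_congr rfl fun j hj => ?_)
  have hj : j + 1 ≤ k := mem_range.mp hj
  rw [Nat.sub_sub, add_comm 1 j, Nat.cast_sub hj]
  push_cast
  ring

lemma F_succ_add_half_sub (k : ℕ) (x : ℝ) :
    F (k + 1) (x + 1 / 2) - F (k + 1) (x - 1 / 2) = F k x := by
  have hright : x + 1 / 2 + (((k + 1 : ℕ) : ℝ) - 1) / 2 = x + ((k : ℝ) - 1) / 2 + 1 := by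
    push_cast; ring
  have hleft : x - 1 / 2 + (((k + 1 : ℕ) : ℝ) - 1) / 2 = x + ((k : ℝ) - 1) / 2 := by
    push_cast; ring
  rw [F, F, F, hright, hleft, gbinom_add_one_succ, gbinom_succ]
  field_simp
  ring

lemma F_add_two (k : ℕ) (x : ℝ) :
    F (k + 2) x = (x ^ 2 - ((k + 1) / 2) ^ 2) / ((k + 1) * (k + 2)) * F k x := by
  have hshift : x + (((k + 2 : ℕ) : ℝ) - 1) / 2 = x + ((k : ℝ) - 1) / 2 + 1 := by
    push_cast; ring
  rw [F, F, hshift, gbinom_add_one_succ, gbinom_succ]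
  push_cast
  field_simp
  ring

lemma four_mul_F_add_two (k : ℕ) (x : ℝ) :
    4 * ((k + 2) * F (k + 2) x) + k * F k x
      = 4 * x * F (k + 1) (x + 1 / 2) - (2 * x + 1) * F k x := by
  have hhalf : x + 1 / 2 + (((k + 1 : ℕ) : ℝ) - 1) / 2 = x + ((k : ℝ) - 1) / 2 + 1 := by
    push_cast; ring
  have hF : F (k + 1) (x + 1 / 2) = (x + ((k : ℝ) - 1) / 2 + 1) / (k + 1) * F k x := by
    rw [F, hhalf, gbinom_add_one_succ, F]
  rw [F_add_two, hF]
  field_simp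
  ring

lemma abs_F_apply_zero_le (k : ℕ) : |F k 0| ≤ (1 / 2) ^ k := by
  induction k using Nat.twoStepInduction with
  | zero => simp [F_zero]
  | one => simp [F, gbinom]
  | more k ih _ =>
    have hratio : ((k : ℝ) + 1) / (4 * (k + 2)) ≤ (1 / 2) ^ 2 := by
      rw [div_le_iff₀ (by positivity)]; linarith
    calc |F (k + 2) 0| = (k + 1) / (4 * (k + 2)) * |F k 0| := by
          rw [F_add_two, abs_mul, ← abs_neg, abs_of_nonneg]
          · field_simp
            ring
          · field_simp
            ring_nf
            positivity
      _ ≤ (1 / 2) ^ 2 * (1 / 2) ^ k := by gcongr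
      _ = (1 / 2) ^ (k + 2) := by ring

/-! ### Generating series -/

lemma eq_zero_of_mul_derivative_eq_mul {K : Type*} [Field K] [CharZero K] {U A D : K⟦X⟧}
    (hU : constantCoeff U ≠ 0) (hD : U * d⁄dX K D = A * D)
    (h0 : constantCoeff D = 0) : D = 0 := by
  have hD' : d⁄dX K D = U⁻¹ * A * D := by
    rw [mul_assoc, ← hD, ← mul_assoc, PowerSeries.inv_mul_cancel U hU, one_mul]
  ext n
  induction n using Nat.strong_induction_on with
  | _ n ih =>
    cases n with
    | zero => simpa using h0
    | succ n =>
      have hn := congrArg (coeff n) hD'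
      rw [PowerSeries.coeff_derivative, PowerSeries.coeff_mul, sum_eq_zero] at hn
      · exact (mul_eq_zero.mp hn).resolve_right n.cast_add_one_ne_zero
      · intro p hp
        rw [ih p.2 (Finset.Nat.antidiagonal.snd_lt hp), map_zero, mul_zero]

/-- The generating series `∑ₖ F k x tᵏ`, equal to `w ^ (2x) / √(1 + t²/4)` for `w` the
`stepSeries` below. -/
def FSeries (x : ℝ) : ℂ⟦X⟧ := PowerSeries.mk fun k => (F k x : ℂ)

lemma FSeries_add_half_sub (x : ℝ) :
    FSeries (x + 1 / 2) - FSeries (x - 1 / 2) = X * FSeries x := by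
  ext k
  cases k with
  | zero => simp [FSeries, F_zero]
  | succ k =>
    rw [map_sub, PowerSeries.coeff_succ_X_mul]
    simp only [FSeries, PowerSeries.coeff_mk, ← F_succ_add_half_sub k x, Complex.ofReal_sub]

lemma rescale_neg_one_FSeries (x : ℝ) : rescale (-1) (FSeries x) = FSeries (-x) := by
  ext k
  simp [FSeries, F_neg]

lemma norm_coeff_FSeries_zero_le (k : ℕ) : ‖coeff k (FSeries 0)‖ ≤ (1 / 2) ^ k := by
  simpa [FSeries] using abs_F_apply_zero_le k

lemma derivative_FSeries (x : ℝ) :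
    (4 + X ^ 2) * d⁄dX ℂ (FSeries x)
      = 4 * C (x : ℂ) * FSeries (x + 1 / 2) - (2 * C (x : ℂ) + 1) * X * FSeries x := by
  have hX (k : ℕ) : coeff k (X * d⁄dX ℂ (FSeries x)) = k * (F k x : ℂ) := by
    cases k with
    | zero => simp
    | succ k => simp [FSeries, PowerSeries.coeff_succ_X_mul, PowerSeries.coeff_derivative, mul_comm]
  have h2 : (2 : ℂ⟦X⟧) = C 2 := (map_ofNat C 2).symm
  have h4 : (4 : ℂ⟦X⟧) = C 4 := (map_ofNat C 4).symm
  ext k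
  rw [h2, h4, ← map_mul, ← map_mul, ← map_one C, ← map_add, add_mul, pow_two, mul_assoc X,
    mul_assoc (C _) X, map_add, map_sub]
  simp only [PowerSeries.coeff_C_mul]
  cases k with
  | zero => simp [FSeries, PowerSeries.coeff_derivative, F, gbinom]
  | succ k =>
    simp only [PowerSeries.coeff_succ_X_mul, hX]
    simp only [PowerSeries.coeff_derivative, FSeries, PowerSeries.coeff_mk]
    have hk := congrArg (Complex.ofReal) (four_mul_F_add_two k x)
    push_cast at hk ⊢
    linear_combination hk

lemma constantCoeff_FSeries (x : ℝ) : constantCoeff (FSeries x) = 1 := by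
  simp [FSeries, F_zero, ← PowerSeries.coeff_zero_eq_constantCoeff_apply]

lemma four_add_X_sq_mul_FSeries_zero_sq : (4 + X ^ 2) * FSeries 0 ^ 2 = 4 := by
  refine sub_eq_zero.mp (eq_zero_of_mul_derivative_eq_mul (U := 1) (A := 0) (by simp) ?_ ?_)
  · have hode := derivative_FSeries 0
    have h4 : d⁄dX ℂ 4 = 0 := by
      rw [← map_ofNat C 4, PowerSeries.derivative_C]
    simp only [map_sub, map_add, Derivation.leibniz, PowerSeries.derivative_pow, h4,
      PowerSeries.derivative_X, smul_eq_mul]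
    rw [Complex.ofReal_zero, map_zero] at hode
    push_cast
    linear_combination 2 * FSeries 0 * hode
  · simp [constantCoeff_FSeries, map_ofNat constantCoeff 4]

/-- The power series `w = t/2 + √(1 + t²/4)`; the square root is `(1 + t²/4) * FSeries 0`. -/
def stepSeries : ℂ⟦X⟧ := C (1 / 4) * (2 * X + (4 + X ^ 2) * FSeries 0)

lemma four_mul_stepSeries : 4 * stepSeries = 2 * X + (4 + X ^ 2) * FSeries 0 := by
  have h4 : (4 : ℂ⟦X⟧) * C (1 / 4) = 1 := by
    rw [← map_ofNat C 4, ← map_mul]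
    norm_num
  rw [stepSeries, ← mul_assoc, h4, one_mul]

lemma stepSeries_sq : stepSeries ^ 2 = 1 + X * stepSeries := by
  have h16 : (16 : ℂ⟦X⟧) ≠ 0 := by
    rw [← map_ofNat C 16, Ne, map_eq_zero_iff C PowerSeries.C_injective]
    norm_num
  refine mul_left_cancel₀ h16 ?_
  linear_combination (4 * stepSeries - 2 * X + (4 + X ^ 2) * FSeries 0) * four_mul_stepSeries
    + (4 + X ^ 2) * four_add_X_sq_mul_FSeries_zero_sq

lemma constantCoeff_stepSeries : constantCoeff stepSeries = 1 := by
  simp [stepSeries, constantCoeff_FSeries, map_ofNat constantCoeff 4]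

lemma derivative_stepSeries :
    (4 + X ^ 2) * d⁄dX ℂ stepSeries = (2 * stepSeries - X) * stepSeries := by
  have hsq := congrArg (d⁄dX ℂ) stepSeries_sq
  simp only [map_add, Derivation.leibniz, PowerSeries.derivative_pow, PowerSeries.derivative_one,
    PowerSeries.derivative_X, smul_eq_mul] at hsq
  push_cast at hsq
  linear_combination (2 * stepSeries - X) * hsq
    - 4 * d⁄dX ℂ stepSeries * stepSeries_sq

lemma FSeries_add_half (x : ℝ) : FSeries (x + 1 / 2) = stepSeries * FSeries x := by
  refine sub_eq_zero.mp (eq_zero_of_mul_derivative_eq_mul (U := 4 + X ^ 2)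
    (A := C (x : ℂ) * (2 * X - 4 * stepSeries)) ?_ ?_ ?_)
  · simp [map_ofNat constantCoeff 4]
  · have hode := derivative_FSeries x
    have hode' := derivative_FSeries (x + 1 / 2)
    have hrec := FSeries_add_half_sub (x + 1 / 2)
    have hC : (2 : ℂ⟦X⟧) * C ((x + 1 / 2 : ℝ) : ℂ) = 2 * C (x : ℂ) + 1 := by
      rw [← map_ofNat C 2, ← map_one C, ← map_mul, ← map_mul, ← map_add]
      push_cast
      ring_nf
    rw [add_sub_cancel_right] at hrec
    simp only [map_sub, Derivation.leibniz, smul_eq_mul]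
    linear_combination hode' - stepSeries * hode - FSeries x * derivative_stepSeries
      + (2 * FSeries (x + 1 / 2 + 1 / 2) - X * FSeries (x + 1 / 2)) * hC
      + (4 * C (x : ℂ) + 2) * hrec
      - (4 * C (x : ℂ) + 2) * FSeries x * stepSeries_sq
  · simp [constantCoeff_FSeries, constantCoeff_stepSeries]

lemma FSeries_sub_half (x : ℝ) :
    FSeries (x - 1 / 2) = rescale (-1) stepSeries * FSeries x := by
  have h := congrArg (rescale (-1)) (FSeries_add_half (-x))
  simpa [rescale_neg_one_FSeries, neg_add_eq_sub, sub_eq_add_neg] using h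

/-- The discrete power `Z k` as a function on the complex plane, a discretization of `zᵏ/k!`. -/
def discretePow (k : ℕ) (z : ℂ) : ℂ := Z k z.re z.im

/-- The generating series `∑ₖ discretePow k z tᵏ`. -/
def ZSeries (z : ℂ) : ℂ⟦X⟧ := PowerSeries.mk fun k => discretePow k z

lemma ZSeries_eq (z : ℂ) : ZSeries z = FSeries z.re * rescale I (FSeries z.im) := by
  ext k
  rw [PowerSeries.coeff_mul, ← Finset.Nat.sum_antidiagonal_swap,
    Finset.Nat.sum_antidiagonal_eq_sum_range_succ_mk]
  simp only [ZSeries, discretePow, Z, FSeries, PowerSeries.coeff_mk, PowerSeries.coeff_rescale,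
    Prod.swap_prod_mk]
  exact sum_congr rfl fun l _ => by ring

lemma ZSeries_add_half_I_pow (z : ℂ) (r : Fin 4) :
    ZSeries (z + 1 / 2 * I ^ (r : ℕ)) = rescale (I ^ (r : ℕ)) stepSeries * ZSeries z := by
  have hadd (x : ℝ) : FSeries (x + 2⁻¹) = stepSeries * FSeries x := by
    simpa using FSeries_add_half x
  have hsub (x : ℝ) : FSeries (x + -2⁻¹) = rescale (-1) stepSeries * FSeries x := by
    simpa [sub_eq_add_neg] using FSeries_sub_half x
  simp only [ZSeries_eq]
  fin_cases r
  · simp [hadd, mul_assoc]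
  · simp [hadd, mul_left_comm]
  · simp [hsub, mul_assoc]
  · simp [pow_succ, hsub, PowerSeries.rescale_rescale, mul_left_comm]

lemma ZSeries_add_sub (z : ℂ) (r : Fin 4) :
    ZSeries (z + I ^ (r : ℕ)) - ZSeries z
      = C (I ^ (r : ℕ)) * (X * ZSeries (z + 1 / 2 * I ^ (r : ℕ))) := by
  have hsq := congrArg (rescale (I ^ (r : ℕ))) stepSeries_sq
  have hz : z + I ^ (r : ℕ) = z + 1 / 2 * I ^ (r : ℕ) + 1 / 2 * I ^ (r : ℕ) := by ring
  rw [map_pow, map_add, map_one, map_mul, PowerSeries.rescale_X] at hsq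
  rw [hz, ZSeries_add_half_I_pow, ZSeries_add_half_I_pow]
  linear_combination ZSeries z * hsq

lemma sum_ZSeries_add_I_pow (z : ℂ) :
    ∑ r : Fin 4, ZSeries (z + I ^ (r : ℕ)) = 4 * ZSeries z := by
  have hright : ZSeries (z + 1) - ZSeries z = X * ZSeries (z + 1 / 2) := by
    simpa using ZSeries_add_sub z 0
  have hup : ZSeries (z + I) - ZSeries z = C I * (X * ZSeries (z + 1 / 2 * I)) := by
    simpa using ZSeries_add_sub z 1
  have hleft : ZSeries (z - 1) - ZSeries z = -(X * ZSeries (z - 1 / 2)) := by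
    simpa [← sub_eq_add_neg] using ZSeries_add_sub z 2
  have hdown : ZSeries (z - I) - ZSeries z = -(C I * (X * ZSeries (z - 1 / 2 * I))) := by
    simpa [pow_succ, ← sub_eq_add_neg] using ZSeries_add_sub z 3
  have hre : ZSeries (z + 1 / 2) - ZSeries (z - 1 / 2) = X * ZSeries z := by
    have hz : z - 1 / 2 + 1 = z + 1 / 2 := by ring
    simpa [hz, -one_div] using ZSeries_add_sub (z - 1 / 2) 0
  have him : ZSeries (z + 1 / 2 * I) - ZSeries (z - 1 / 2 * I) = C I * (X * ZSeries z) := by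
    have hz : z - 1 / 2 * I + I = z + 1 / 2 * I := by ring
    simpa [hz, -one_div] using ZSeries_add_sub (z - 1 / 2 * I) 1
  have hI : C I ^ 2 = (-1 : ℂ⟦X⟧) := by simp [← map_pow]
  have hsum : ∑ r : Fin 4, ZSeries (z + I ^ (r : ℕ))
      = ZSeries (z + 1) + ZSeries (z + I) + ZSeries (z - 1) + ZSeries (z - I) := by
    simp [Fin.sum_univ_four, pow_succ, ← sub_eq_add_neg]
  rw [hsum]
  linear_combination hright + hup + hleft + hdown + X * hre + C I * X * him
    + X ^ 2 * ZSeries z * hI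

/-! ### Averages over four neighbours -/

/-- The operator averaging a function over the four neighbours `z ± h`, `z ± h * I` of each
point `z`; `avg 1` is the transition operator of the simple random walk. -/
def avg (h : ℂ) : Module.End ℝ (ℂ → ℝ) where
  toFun f z := (∑ r : Fin 4, f (z + h * I ^ (r : ℕ))) / 4
  map_add' f g := by
    ext z
    simp [sum_add_distrib, add_div]
  map_smul' c f := by
    ext z
    simp [← mul_sum, mul_div_assoc]

lemma avg_apply (h : ℂ) (f : ℂ → ℝ) (z : ℂ) :
    avg h f z = (∑ r : Fin 4, f (z + h * I ^ (r : ℕ))) / 4 := rfl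

lemma avg_commute (h h' : ℂ) : Commute (avg h) (avg h') := by
  refine LinearMap.ext fun f => funext fun z => ?_
  simp only [Module.End.mul_apply, avg_apply, ← sum_div]
  rw [sum_comm]
  simp only [add_right_comm]

lemma avg_pow_apply_nonneg (h : ℂ) {f : ℂ → ℝ} (hf : ∀ z, 0 ≤ f z) (n : ℕ) (z : ℂ) :
    0 ≤ (avg h ^ n) f z := by
  induction n generalizing z with
  | zero => exact hf z
  | succ n ih =>
    rw [pow_succ', Module.End.mul_apply, avg_apply]
    exact div_nonneg (sum_nonneg fun r _ => ih _) (by norm_num)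

lemma sum_piFinset_const_succ {α M : Type*} [AddCommMonoid M] (S : Finset α) (n : ℕ)
    (g : (Fin (n + 1) → α) → M) :
    ∑ s ∈ Fintype.piFinset (fun _ : Fin (n + 1) => S), g s
      = ∑ x ∈ S, ∑ s ∈ Fintype.piFinset (fun _ : Fin n => S), g (Fin.cons x s) := by
  rw [← sum_product']
  refine sum_bij' (fun s _ => (s 0, Fin.tail s)) (fun p _ => Fin.cons p.1 p.2) ?_ ?_ ?_ ?_ ?_
  · exact fun s hs => mem_product.mpr (Fin.mem_piFinset_iff_zero_tail.mp hs)
  · exact fun p hp => Fin.mem_piFinset_iff_zero_tail.mpr (by simpa [Fin.tail_def] using hp)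
  all_goals simp

/-- The embedding of `ℤ²` into the complex plane as the Gaussian integers. -/
def latticePoint : ℤ × ℤ →+ ℂ where
  toFun p := p.1 + p.2 * I
  map_zero' := by simp
  map_add' p q := by
    push_cast [Prod.fst_add, Prod.snd_add]
    ring

lemma latticePoint_apply (p : ℤ × ℤ) : latticePoint p = p.1 + p.2 * I := rfl

lemma sum_Sfin_latticePoint {M : Type*} [AddCommMonoid M] (f : ℂ → M) :
    ∑ p ∈ Sfin, f (latticePoint p) = ∑ r : Fin 4, f (I ^ (r : ℕ)) := by
  simp [Sfin, Fin.sum_univ_four, latticePoint_apply, pow_succ, add_assoc,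
    add_left_comm (f (-1))]

lemma avg_one_pow_apply (f : ℂ → ℝ) (n : ℕ) (z : ℂ) :
    (avg 1 ^ n) f z = 4⁻¹ ^ n *
      ∑ s ∈ Fintype.piFinset fun _ : Fin n => Sfin, f (z + latticePoint (∑ i, s i)) := by
  induction n generalizing z with
  | zero => simp
  | succ n ih =>
    rw [pow_succ', Module.End.mul_apply, avg_apply, sum_piFinset_const_succ]
    simp only [Fin.sum_univ_succ (n := n), Fin.cons_zero, Fin.cons_succ, map_add, ← add_assoc]
    rw [sum_Sfin_latticePoint (fun x =>
      ∑ s ∈ Fintype.piFinset fun _ : Fin n => Sfin, f (z + x + latticePoint (∑ i, s i)))]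
    simp only [ih, one_mul, ← mul_sum]
    ring

lemma Qk_eq_avg_one_pow (k n : ℕ) :
    Qk k n = (avg 1 ^ n) (fun z => ‖discretePow k z‖ ^ 2) 0 := by
  simp [avg_one_pow_apply, Qk, Q, discretePow, latticePoint_apply, -map_sum]

lemma sum_norm_sq_eq_of_sum_eq {ι E : Type*} [NormedAddCommGroup E] [InnerProductSpace ℝ E]
    {s : Finset ι} {u : ι → E} {c : E} (h : ∑ i ∈ s, u i = #s • c) :
    ∑ i ∈ s, ‖u i‖ ^ 2 = ∑ i ∈ s, ‖u i - c‖ ^ 2 + #s * ‖c‖ ^ 2 := by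
  have hinner : ∑ i ∈ s, inner ℝ (u i) c = #s * ‖c‖ ^ 2 := by
    rw [← sum_inner, h, ← Nat.cast_smul_eq_nsmul ℝ, real_inner_smul_left,
      real_inner_self_eq_norm_sq]
  simp only [norm_sub_sq_real, sum_add_distrib, sum_sub_distrib, ← mul_sum, hinner, sum_const,
    nsmul_eq_mul]
  ring

lemma discretePow_succ_add_sub (k : ℕ) (z : ℂ) (r : Fin 4) :
    discretePow (k + 1) (z + I ^ (r : ℕ)) - discretePow (k + 1) z
      = I ^ (r : ℕ) * discretePow k (z + 1 / 2 * I ^ (r : ℕ)) := by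
  simpa only [map_sub, PowerSeries.coeff_C_mul, PowerSeries.coeff_succ_X_mul, ZSeries,
    PowerSeries.coeff_mk] using congrArg (coeff (k + 1)) (ZSeries_add_sub z r)

lemma sum_discretePow_add_I_pow (k : ℕ) (z : ℂ) :
    ∑ r : Fin 4, discretePow k (z + I ^ (r : ℕ)) = 4 * discretePow k z := by
  simpa only [← map_ofNat C 4, map_sum, PowerSeries.coeff_C_mul, ZSeries, PowerSeries.coeff_mk]
    using congrArg (coeff k) (sum_ZSeries_add_I_pow z)

lemma avg_one_sub_one_norm_sq_discretePow (k : ℕ) :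
    (avg 1 - 1) (fun z => ‖discretePow (k + 1) z‖ ^ 2)
      = avg (1 / 2) fun z => ‖discretePow k z‖ ^ 2 := by
  ext z
  have hmean := sum_norm_sq_eq_of_sum_eq (s := univ) (c := discretePow (k + 1) z)
    (u := fun r : Fin 4 => discretePow (k + 1) (z + I ^ (r : ℕ)))
    (by simpa using sum_discretePow_add_I_pow (k + 1) z)
  simp only [discretePow_succ_add_sub, norm_mul, norm_pow, Complex.norm_I, one_pow, one_mul,
    card_univ, Fintype.card_fin] at hmean
  simp only [LinearMap.sub_apply, Module.End.one_apply, Pi.sub_apply, avg_apply, one_mul, hmean]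
  push_cast
  ring

lemma avg_one_sub_one_pow_norm_sq_discretePow (m k : ℕ) :
    ((avg 1 - 1) ^ m) (fun z => ‖discretePow (k + m) z‖ ^ 2)
      = (avg (1 / 2) ^ m) fun z => ‖discretePow k z‖ ^ 2 := by
  induction m with
  | zero => rfl
  | succ m ih =>
    have hcomm : Commute ((avg 1 - 1) ^ m) (avg (1 / 2)) :=
      ((avg_commute 1 (1 / 2)).sub_left (.one_left _)).pow_left m
    rw [pow_succ, Module.End.mul_apply, ← add_assoc, avg_one_sub_one_norm_sq_discretePow,
      ← Module.End.mul_apply, hcomm.eq, Module.End.mul_apply, ih, ← Module.End.mul_apply,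
      ← pow_succ']

lemma fwd_iterate_pow_apply {α : Type*} (T : Module.End ℝ (α → ℝ)) (f : α → ℝ) (x : α) (m : ℕ) :
    fwd^[m] (fun n => (T ^ n) f x) = fun n => (T ^ n) (((T - 1) ^ m) f) x := by
  induction m with
  | zero => rfl
  | succ m ih =>
    ext n
    rw [Function.iterate_succ_apply', ih, fwd, pow_succ' (T - 1), Module.End.mul_apply,
      LinearMap.sub_apply, Module.End.one_apply, map_sub, pow_succ, Module.End.mul_apply,
      Pi.sub_apply]

lemma a_eq_avg_half_pow {k j : ℕ} (hj : j ≤ k) :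
    a k j = (avg (1 / 2) ^ (k - j)) (fun z => ‖discretePow j z‖ ^ 2) 0 := by
  have hQ : Qk k = fun n => (avg 1 ^ n) (fun z => ‖discretePow k z‖ ^ 2) 0 :=
    funext (Qk_eq_avg_one_pow k)
  rw [a, hQ, fwd_iterate_pow_apply, ← avg_one_sub_one_pow_norm_sq_discretePow,
    Nat.add_sub_cancel' hj]
  simp only [pow_zero, Module.End.one_apply]

lemma a_nonneg {k j : ℕ} (hj : j ≤ k) : 0 ≤ a k j := by
  rw [a_eq_avg_half_pow hj]
  exact avg_pow_apply_nonneg _ (fun z => sq_nonneg _) _ _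

/-! ### The upper bound -/

lemma norm_coeff_stepSeries_le_one (n : ℕ) : ‖coeff n stepSeries‖ ≤ 1 := by
  have hF := norm_coeff_FSeries_zero_le
  have hw (n : ℕ) : 4 * coeff n stepSeries
      = 2 * coeff n X + 4 * coeff n (FSeries 0) + coeff n (X ^ 2 * FSeries 0) := by
    simpa only [← map_ofNat C 4, ← map_ofNat C 2, add_mul, map_add, PowerSeries.coeff_C_mul,
      add_assoc] using congrArg (coeff n) four_mul_stepSeries
  suffices h : ‖4 * coeff n stepSeries‖ ≤ 4 by
    rw [norm_mul, RCLike.norm_ofNat] at h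
    linarith
  rw [hw]
  match n with
  | 0 => simp [PowerSeries.coeff_X_pow_mul', FSeries, F_zero]
  | 1 => norm_num [PowerSeries.coeff_X_pow_mul', FSeries, F, gbinom]
  | n + 2 =>
    calc _ = ‖4 * coeff (n + 2) (FSeries 0) + coeff n (FSeries 0)‖ := by
          simp [PowerSeries.coeff_X_pow_mul', PowerSeries.coeff_X]
      _ ≤ 4 * (1 / 2) ^ (n + 2) + (1 / 2) ^ n := by
          refine norm_add_le_of_le ?_ (hF n)
          simpa using hF (n + 2)
      _ = 2 * (1 / 2) ^ n := by ring
      _ ≤ 4 := by linarith [pow_le_one₀ (n := n) (a := (1 / 2 : ℝ)) (by norm_num) (by norm_num)]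

lemma residuePart_stepSeries_majorized (r : Fin 4) :
    Majorized (residuePart 4 r stepSeries) (X ^ (r : ℕ) * quarticGeom) := by
  intro n
  rw [residuePart, PowerSeries.coeff_mk, PowerSeries.coeff_X_pow_mul', coeff_quarticGeom]
  have hr : n % 4 = r → (r : ℕ) ≤ n ∧ 4 ∣ n - r := by omega
  by_cases hn : n % 4 = r
  · simpa [hn, hr hn] using norm_coeff_stepSeries_le_one n
  · rw [if_neg hn, norm_zero]
    split_ifs <;> norm_num

lemma FSeries_zero_majorized : Majorized (FSeries 0) (rescale (1 / 2) (PowerSeries.mk 1)) := by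
  intro n
  simpa [PowerSeries.coeff_rescale] using norm_coeff_FSeries_zero_le n

lemma ZSeries_zero : ZSeries 0 = FSeries 0 * rescale I (FSeries 0) := by
  rw [ZSeries_eq, Complex.zero_re, Complex.zero_im]

lemma rescale_I_ZSeries_zero : rescale I (ZSeries 0) = ZSeries 0 := by
  rw [ZSeries_zero, map_mul, PowerSeries.rescale_rescale, Complex.I_mul_I,
    rescale_neg_one_FSeries, neg_zero, mul_comm]

lemma norm_coeff_ZSeries_zero_le_one (n : ℕ) : ‖coeff n (ZSeries 0)‖ ≤ 1 := by
  have hmaj := FSeries_zero_majorized.mul (FSeries_zero_majorized.rescale Complex.norm_I.le) n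
  rw [← ZSeries_zero, ← map_mul, ← pow_two, PowerSeries.mk_one_pow_eq_mk_choose_add,
    PowerSeries.coeff_rescale, PowerSeries.coeff_mk] at hmaj
  have hn : ((n + 1 : ℕ) : ℝ) ≤ 2 ^ n := mod_cast Nat.lt_two_pow_self
  calc ‖coeff n (ZSeries 0)‖ ≤ (1 / 2) ^ n * ((n + 1 : ℕ) : ℝ) := by simpa [add_comm] using hmaj
    _ ≤ (1 / 2) ^ n * 2 ^ n := by gcongr
    _ = 1 := by rw [← mul_pow]; norm_num

lemma ZSeries_zero_majorized : Majorized (ZSeries 0) quarticGeom := by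
  intro n
  rw [coeff_quarticGeom]
  split_ifs with hn
  · exact norm_coeff_ZSeries_zero_le_one n
  · rw [coeff_eq_zero_of_rescale_eq rescale_I_ZSeries_zero
      (Complex.isPrimitiveRoot_I.pow_eq_one_iff_dvd n |>.not.mpr hn), norm_zero]

lemma avg_half_norm_sq_coeff_mul_ZSeries (B : ℂ⟦X⟧) (j : ℕ) :
    avg (1 / 2) (fun z => ‖coeff j (B * ZSeries z)‖ ^ 2)
      = ∑ r : Fin 4, fun z => ‖coeff j (B * residuePart 4 r stepSeries * ZSeries z)‖ ^ 2 := by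
  ext z
  have hI (i : ℕ) : (I ^ i) ^ 4 = 1 := by rw [pow_right_comm, Complex.I_pow_four, one_pow]
  have hstep (i : Fin 4) : coeff j (B * ZSeries (z + 1 / 2 * I ^ (i : ℕ)))
      = ∑ r : Fin 4, (I ^ (i : ℕ)) ^ (r : ℕ)
        * coeff j (B * residuePart 4 r stepSeries * ZSeries z) := by
    rw [ZSeries_add_half_I_pow, rescale_eq_sum_residuePart (hI i), sum_mul, mul_sum, map_sum]
    refine sum_congr rfl fun r _ => ?_
    rw [← PowerSeries.coeff_C_mul]
    exact congrArg _ (by ring)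
  simp only [avg_apply, hstep, Finset.sum_apply]
  rw [sum_norm_sq_sum_pow_mul Complex.isPrimitiveRoot_I]
  exact mul_div_cancel_left₀ _ four_ne_zero

lemma avg_half_pow_norm_sq_coeff_mul_ZSeries_le (m j : ℕ) {p l : ℕ} {B : ℂ⟦X⟧}
    (hB : Majorized B (X ^ l * quarticGeom ^ p)) :
    (avg (1 / 2) ^ m) (fun z => ‖coeff j (B * ZSeries z)‖ ^ 2) 0
      ≤ coeff j (X ^ l * ((∑ r : Fin 4, X ^ (r : ℕ)) ^ m
        * hadamardSq (quarticGeom ^ (m + p + 1)))) := by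
  induction m generalizing p l B with
  | zero =>
    have h := (hB.mul ZSeries_zero_majorized).norm_coeff_sq_le j
    rw [mul_assoc, ← pow_succ, hadamardSq_X_pow_mul] at h
    simpa using h
  | succ m ih =>
    have hBr (r : Fin 4) : Majorized (B * residuePart 4 r stepSeries)
        (X ^ (l + r) * quarticGeom ^ (p + 1)) := by
      convert hB.mul (residuePart_stepSeries_majorized r) using 1
      ring
    rw [pow_succ, Module.End.mul_apply, avg_half_norm_sq_coeff_mul_ZSeries, map_sum,
      Finset.sum_apply]
    refine (sum_le_sum fun r _ => ih (hBr r)).trans_eq ?_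
    rw [← map_sum, ← add_assoc m, add_right_comm m 1 p]
    simp only [pow_add X l, pow_succ (∑ r : Fin 4, X ^ (r : ℕ)) m, ← sum_mul, ← mul_sum]
    exact congrArg _ (by ring)

lemma avg_half_pow_norm_sq_discretePow_le (m j : ℕ) :
    (avg (1 / 2) ^ m) (fun z => ‖discretePow j z‖ ^ 2) 0
      ≤ coeff j ((∑ r : Fin 4, X ^ (r : ℕ)) ^ m * hadamardSq (quarticGeom ^ (m + 1))) := by
  have hone : Majorized (1 : ℂ⟦X⟧) (X ^ 0 * quarticGeom ^ 0) := by
    intro n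
    simp only [pow_zero, mul_one, PowerSeries.coeff_one]
    split_ifs <;> simp
  simpa [ZSeries] using avg_half_pow_norm_sq_coeff_mul_ZSeries_le m j hone

theorem akj_global_bound :
    ∃ A₁ > (0 : ℝ), ∃ B₁ > (0 : ℝ), ∀ k j : ℕ, j ≤ k →
      0 ≤ a k j ∧ a k j ≤ B₁ * gbinom (A₁ * k) j := by
  refine ⟨7, by norm_num, 1, one_pos, fun k j hj => ⟨a_nonneg hj, ?_⟩⟩
  have htop : 7 * (k - j) + j ≤ 7 * k := by omega
  have hcast : (7 : ℝ) * k = ((7 * k : ℕ) : ℝ) := by push_cast; rfl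
  calc a k j = (avg (1 / 2) ^ (k - j)) (fun z => ‖discretePow j z‖ ^ 2) 0 := a_eq_avg_half_pow hj
    _ ≤ coeff j ((∑ r : Fin 4, X ^ (r : ℕ)) ^ (k - j)
          * hadamardSq (quarticGeom ^ (k - j + 1))) := avg_half_pow_norm_sq_discretePow_le _ _
    _ ≤ ((7 * (k - j) + j).choose j : ℝ) := coeff_sum_X_pow_pow_mul_hadamardSq_le _ _
    _ ≤ ((7 * k).choose j : ℝ) := mod_cast Nat.choose_le_choose j htop
    _ = 1 * gbinom (7 * k) j := by rw [one_mul, hcast, gbinom_natCast]
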